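/- arXiv:2405.03158 — 3 statements merged into one kernel-verified Lean document; each statement's English description precedes it below -/
import Mathlib

section
/- Assume that for each leader action a the best response F_br(a) is the unique maximizer of b ↦ μ_f(a,b), and that a_se is the unique maximizer of a ↦ μ_l(a, F_br(a)) (so the set of qualified pairs is nonempty). Then the optimal value of the follower's manipulation problem equals the greedy value computed by FBM: max{ μ_f(a′,b′) : (a′,b′) a qualified pair } = max{ μ_f(a, b) : (a, b) ∈ 𝒜 × ℬ and μ_l(a, b) > min_{b′ ∈ ℬ} μ_l(a′, b′) for every a′ ≠ a }. -/
/-- An action pair `(a', b')` is a *qualified pair* if some response function `F`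
makes `{F, (a', b')}` a qualified manipulation: `b' = F a'` and
`μ_l(a', b') > μ_l(a, F(a))` for every `a ≠ a'`. -/
def QualifiedPair {A B : Type*} (μl : A → B → ℝ) (a' : A) (b' : B) : Prop :=
  ∃ F : A → B, b' = F a' ∧ ∀ a : A, a ≠ a' → μl a' b' > μl a (F a)

theorem qualifiedPair_iff_forall_exists_lt {A B : Type*} {μl : A → B → ℝ} {a : A} {b : B} :
    QualifiedPair μl a b ↔ ∀ a' : A, a' ≠ a → ∃ b' : B, μl a' b' < μl a b := by
  constructor
  · rintro ⟨F, -, hF⟩ a' ha'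
    exact ⟨F a', hF a' ha'⟩
  · intro h
    -- The constraints on `F` at different leader actions are independent, so `F` can be chosen
    -- one action at a time.
    have hresponse : ∀ a' : A, ∃ b' : B, (a' = a → b = b') ∧ (a' ≠ a → μl a' b' < μl a b) := by
      intro a'
      rcases eq_or_ne a' a with rfl | ha'
      · exact ⟨b, fun _ ↦ rfl, fun hne ↦ absurd rfl hne⟩
      · obtain ⟨b', hb'⟩ := h a' ha'
        exact ⟨b', fun heq ↦ absurd heq ha', fun _ ↦ hb'⟩
    choose F hFa hF using hresponse
    exact ⟨F, hFa a rfl, hF⟩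

theorem qualifiedPair_iff_forall_inf'_lt {A B : Type*} [Fintype B] [Nonempty B]
    {μl : A → B → ℝ} {a : A} {b : B} :
    QualifiedPair μl a b ↔
      ∀ a' : A, a' ≠ a → Finset.univ.inf' Finset.univ_nonempty (μl a') < μl a b := by
  simp only [qualifiedPair_iff_forall_exists_lt, Finset.inf'_lt_iff, Finset.mem_univ, true_and]

theorem exists_isGreatest_of_finite_of_nonempty {R : Type*} [LinearOrder R] {s : Set R}
    (hs : s.Finite) (hne : s.Nonempty) : ∃ m, IsGreatest s m :=
  Set.exists_max_image s id hs hne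

theorem fbm_computes_optimal_value_general {A B R : Type*} [Finite A] [Fintype B] [Nonempty B]
    [LinearOrder R] (μl : A → B → ℝ) (μf : A → B → R) (hqual : ∃ a b, QualifiedPair μl a b) :
    ∃ m : R,
      IsGreatest {x : R | ∃ a : A, ∃ b : B, QualifiedPair μl a b ∧ x = μf a b} m ∧
      IsGreatest {x : R | ∃ a : A, ∃ b : B,
        (∀ a' : A, a' ≠ a → μl a b > Finset.univ.inf' Finset.univ_nonempty (μl a')) ∧
        x = μf a b} m := by
  have hfin : {x : R | ∃ a : A, ∃ b : B, QualifiedPair μl a b ∧ x = μf a b}.Finite := by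
    refine (Set.finite_range (Function.uncurry μf)).subset ?_
    rintro _ ⟨a, b, -, rfl⟩
    exact Set.mem_range_self (a, b)
  obtain ⟨a, b, hab⟩ := hqual
  obtain ⟨m, hm⟩ := exists_isGreatest_of_finite_of_nonempty hfin ⟨μf a b, a, b, hab, rfl⟩
  exact ⟨m, hm, by simpa only [qualifiedPair_iff_forall_inf'_lt] using hm⟩

/-- The optimal value of the follower's manipulation problem (the maximum of `μ_f` over
qualified pairs) equals the greedy value computed by FBM (the maximum of `μ_f` over pairs
`(a, b)` such that `μ_l(a, b) > min_{b'} μ_l(a', b')` for every `a' ≠ a`): there is a common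
real number that is the greatest value of both sets. -/
theorem fbm_computes_optimal_value
    {A B : Type*} [Fintype A] [Fintype B] [Nonempty A] [Nonempty B]
    (μl μf : A → B → ℝ)
    (hμl : ∀ a b, μl a b ∈ Set.Icc (0 : ℝ) 1)
    (hμf : ∀ a b, μf a b ∈ Set.Icc (0 : ℝ) 1)
    (Fbr : A → B)
    (hbr : ∀ a : A, ∀ b : B, b ≠ Fbr a → μf a b < μf a (Fbr a))
    (a_se : A) (b_se : B)
    (hse : ∀ a : A, a ≠ a_se → μl a (Fbr a) < μl a_se (Fbr a_se))
    (hbse : b_se = Fbr a_se) :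
    ∃ m : ℝ,
      IsGreatest {x : ℝ | ∃ a : A, ∃ b : B, QualifiedPair μl a b ∧ x = μf a b} m ∧
      IsGreatest {x : ℝ | ∃ a : A, ∃ b : B,
        (∀ a' : A, a' ≠ a → μl a b > Finset.univ.inf' Finset.univ_nonempty (μl a')) ∧
        x = μf a b} m := by
  have hqual : QualifiedPair μl a_se (Fbr a_se) := ⟨Fbr, rfl, hse⟩
  exact fbm_computes_optimal_value_general μl μf ⟨a_se, Fbr a_se, hqual⟩
end

section
/- Let 𝒜, ℬ be finite nonempty sets and μ_l, μ_f : 𝒜 × ℬ → ℝ take values in [0,1]. Let F_opt, F_br : 𝒜 → ℬ be response functions such that a ↦ μ_l(a, F_opt(a)) has a unique maximizer a_fm with b_fm = F_opt(a_fm), and a ↦ μ_l(a, F_br(a)) has a unique maximizer a_se with b_se = F_br(a_se). Suppose (a_t)_{t≥1} is a sequence in 𝒜 that is no-regret with respect to a ↦ μ_l(a, F_opt(a)), and (ā_t)_{t≥1} is a sequence in 𝒜 that is no-regret with respect to a ↦ μ_l(a, F_br(a)). Then, as T → ∞, (1/T) Σ_{t=1}^{T} μ_f(a_t, F_opt(a_t))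 − (1/T) Σ_{t=1}^{T} μ_f(ā_t, F_br(ā_t)) converges to Gap(a_fm, a_se) := μ_f(a_fm, b_fm) − μ_f(a_se, b_se). -/
open Filter

/-- A sequence `(a_t)` in a finite nonempty set is *no-regret* with respect to `f` if the
average regret `(1/T) Σ_{t=1}^T (max_a f(a) − f(a_t))` tends to `0` as `T → ∞`. -/
def NoRegret {A : Type*} [Fintype A] [Nonempty A] (aseq : ℕ → A) (f : A → ℝ) : Prop :=
  Tendsto
    (fun T : ℕ =>
      (∑ t ∈ Finset.Icc 1 T,
        (Finset.univ.sup' Finset.univ_nonempty f - f (aseq t))) / T)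
    atTop (nhds 0)

/-!
A unique maximizer `a₀` on a finite set leaves a positive gap at every other action, so the regret
at `a` controls the displacement `‖g a - g a₀‖` of any other payoff `g`, up to a constant
independent of `a`. Averaging, vanishing average regret for `f` forces the averages of `g` to
`g a₀`.
-/

section Average

variable {E : Type*} [SeminormedAddCommGroup E] [NormedSpace ℝ E]

theorem norm_average_sub_le {ι : Type*} {s : Finset ι} (hs : s.Nonempty) {u : ι → E} {c : E}
    {r : ι → ℝ} (hr : ∀ i ∈ s, ‖u i - c‖ ≤ r i) :
    ‖(s.card : ℝ)⁻¹ • ∑ i ∈ s, u i - c‖ ≤ (∑ i ∈ s, r i) / s.card := by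
  have hcard : (s.card : ℝ) ≠ 0 := Nat.cast_ne_zero.2 hs.card_ne_zero
  have hcenter : (s.card : ℝ)⁻¹ • ∑ i ∈ s, u i - c = (s.card : ℝ)⁻¹ • ∑ i ∈ s, (u i - c) := by
    rw [Finset.sum_sub_distrib, Finset.sum_const, smul_sub, ← Nat.cast_smul_eq_nsmul ℝ,
      inv_smul_smul₀ hcard]
  calc ‖(s.card : ℝ)⁻¹ • ∑ i ∈ s, u i - c‖
      = (s.card : ℝ)⁻¹ * ‖∑ i ∈ s, (u i - c)‖ := by
        rw [hcenter, norm_smul, norm_inv, Real.norm_natCast]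
    _ ≤ (s.card : ℝ)⁻¹ * ∑ i ∈ s, r i := by gcongr; exact norm_sum_le_of_le s hr
    _ = (∑ i ∈ s, r i) / s.card := inv_mul_eq_div _ _

theorem tendsto_average_of_norm_sub_le {u : ℕ → E} {c : E} {r : ℕ → ℝ}
    (hur : ∀ t, ‖u t - c‖ ≤ r t)
    (hr : Tendsto (fun T : ℕ => (∑ t ∈ Finset.Icc 1 T, r t) / T) atTop (nhds 0)) :
    Tendsto (fun T : ℕ => (T : ℝ)⁻¹ • ∑ t ∈ Finset.Icc 1 T, u t) atTop (nhds c) := by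
  rw [tendsto_iff_norm_sub_tendsto_zero]
  refine squeeze_zero' (.of_forall fun _ => norm_nonneg _) ?_ hr
  filter_upwards [eventually_ge_atTop 1] with T hT
  simpa only [Nat.card_Icc, Nat.add_sub_cancel] using
    norm_average_sub_le (Finset.nonempty_Icc.2 hT) fun t _ => hur t

end Average

theorem exists_norm_sub_le_mul_sub_of_forall_lt {A E : Type*} [Finite A]
    [SeminormedAddCommGroup E] {f : A → ℝ} {a₀ : A} (hf : ∀ a, a ≠ a₀ → f a < f a₀) (g : A → E) :
    ∃ C : ℝ, ∀ a, ‖g a - g a₀‖ ≤ C * (f a₀ - f a) := by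
  obtain ⟨C, hC⟩ := (Set.finite_range fun a => ‖g a - g a₀‖ / (f a₀ - f a)).bddAbove
  refine ⟨C, fun a => ?_⟩
  rcases eq_or_ne a a₀ with rfl | ha
  · simp
  · exact (div_le_iff₀ (sub_pos.2 (hf a ha))).1 (hC (Set.mem_range_self a))

namespace NoRegret

variable {A : Type*} [Fintype A] [Nonempty A] {aseq : ℕ → A} {f : A → ℝ} {a₀ : A}

theorem tendsto_average_sub (h : NoRegret aseq f) (hf : ∀ a, f a ≤ f a₀) :
    Tendsto (fun T : ℕ => (∑ t ∈ Finset.Icc 1 T, (f a₀ - f (aseq t))) / T) atTop (nhds 0) := by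
  have hmax : Finset.univ.sup' Finset.univ_nonempty f = f a₀ :=
    le_antisymm (Finset.sup'_le _ _ fun a _ => hf a) (Finset.le_sup' f (Finset.mem_univ a₀))
  rwa [NoRegret, hmax] at h

theorem tendsto_average {E : Type*} [SeminormedAddCommGroup E] [NormedSpace ℝ E]
    (h : NoRegret aseq f) (hf : ∀ a, a ≠ a₀ → f a < f a₀) (g : A → E) :
    Tendsto (fun T : ℕ => (T : ℝ)⁻¹ • ∑ t ∈ Finset.Icc 1 T, g (aseq t)) atTop (nhds (g a₀)) := by
  obtain ⟨C, hC⟩ := exists_norm_sub_le_mul_sub_of_forall_lt hf g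
  have hle : ∀ a, f a ≤ f a₀ := fun a =>
    (eq_or_ne a a₀).elim (fun ha => ha ▸ le_rfl) fun ha => (hf a ha).le
  refine tendsto_average_of_norm_sub_le (fun t => hC (aseq t)) ?_
  simpa only [← Finset.mul_sum, mul_div_assoc, mul_zero] using
    (h.tendsto_average_sub hle).const_mul C

end NoRegret

theorem manipulation_average_reward_gap_general
    {A B E : Type*} [Fintype A] [Nonempty A] [SeminormedAddCommGroup E] [NormedSpace ℝ E]
    (μl : A → B → ℝ) (μf : A → B → E) (Fopt Fbr : A → B)
    (a_fm : A) (b_fm : B)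
    (hfm : ∀ a : A, a ≠ a_fm → μl a (Fopt a) < μl a_fm (Fopt a_fm))
    (hbfm : b_fm = Fopt a_fm)
    (a_se : A) (b_se : B)
    (hse : ∀ a : A, a ≠ a_se → μl a (Fbr a) < μl a_se (Fbr a_se))
    (hbse : b_se = Fbr a_se)
    (aseq abar : ℕ → A)
    (hnr1 : NoRegret aseq (fun a => μl a (Fopt a)))
    (hnr2 : NoRegret abar (fun a => μl a (Fbr a))) :
    Tendsto
      (fun T : ℕ =>
        (T : ℝ)⁻¹ • ∑ t ∈ Finset.Icc 1 T, μf (aseq t) (Fopt (aseq t)) -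
          (T : ℝ)⁻¹ • ∑ t ∈ Finset.Icc 1 T, μf (abar t) (Fbr (abar t)))
      atTop (nhds (μf a_fm b_fm - μf a_se b_se)) := by
  subst hbfm hbse
  exact (hnr1.tendsto_average hfm fun a => μf a (Fopt a)).sub
    (hnr2.tendsto_average hse fun a => μf a (Fbr a))

/-- If the leader's sequence `(a_t)` is no-regret against the follower's best manipulation
`F_opt` (with unique optimum `(a_fm, b_fm)`) and `(ā_t)` is no-regret against the best
response `F_br` (with unique optimum `(a_se, b_se)`), then the difference of the follower's
average rewards converges to `Gap(a_fm, a_se) = μ_f(a_fm, b_fm) − μ_f(a_se, b_se)`. -/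
theorem manipulation_average_reward_gap
    {A B : Type*} [Fintype A] [Fintype B] [Nonempty A] [Nonempty B]
    (μl μf : A → B → ℝ)
    (hμl : ∀ a b, μl a b ∈ Set.Icc (0 : ℝ) 1)
    (hμf : ∀ a b, μf a b ∈ Set.Icc (0 : ℝ) 1)
    (Fopt Fbr : A → B)
    (a_fm : A) (b_fm : B)
    (hfm : ∀ a : A, a ≠ a_fm → μl a (Fopt a) < μl a_fm (Fopt a_fm))
    (hbfm : b_fm = Fopt a_fm)
    (a_se : A) (b_se : B)
    (hse : ∀ a : A, a ≠ a_se → μl a (Fbr a) < μl a_se (Fbr a_se))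
    (hbse : b_se = Fbr a_se)
    (aseq abar : ℕ → A)
    (hnr1 : NoRegret aseq (fun a => μl a (Fopt a)))
    (hnr2 : NoRegret abar (fun a => μl a (Fbr a))) :
    Tendsto
      (fun T : ℕ =>
        (∑ t ∈ Finset.Icc 1 T, μf (aseq t) (Fopt (aseq t))) / T -
          (∑ t ∈ Finset.Icc 1 T, μf (abar t) (Fbr (abar t))) / T)
      atTop (nhds (μf a_fm b_fm - μf a_se b_se)) := by
  simpa only [smul_eq_mul, inv_mul_eq_div] using manipulation_average_reward_gap_general
    μl μf Fopt Fbr a_fm b_fm hfm hbfm a_se b_se hse hbse aseq abar hnr1 hnr2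
end

section
/- Let 𝒜 be a finite nonempty set and S_0 > 4 a real number. Let (a_t)_{t=1}^{T} be any sequence in 𝒜, let N_t(a) = #{s ≤ t : a_s = a} denote counts, and let (μ̂_t)_{t=1}^{T} be arbitrary functions μ̂_t : 𝒜 → [0,1]. Suppose that at every round t, the chosen action a_t maximizes the index a ↦ μ̂_t(a) + √(S_0 / max(1, N_{t−1}(a))) over 𝒜. Then whenever T ≥ |𝒜| · (S_0 + 1), every action a ∈ 𝒜 satisfies N_T(a) ≥ S_0 / 4. -/
/-!
If `T ≥ |𝒜| (S₀ + 1)`, some action `b` has been played at least `S₀ + 1` times by pigeonhole, so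
it had already been played at least `S₀` times when it was chosen for the last time. At that round
its index was at most `2`, and since it was maximal, so was the index of every other action. But an
action played fewer than `S₀ / 4` times has index greater than `2`.
-/

section PlayCount

open Finset

variable {A : Type*} [DecidableEq A] (aseq : ℕ → A)

/-- The count `N_t(a)` of the rounds `1, …, t` in which the sequence of play `aseq` chooses `a`;
rounds are numbered from `1`, so the value `aseq 0` is ignored. -/
def playCount (t : ℕ) (a : A) : ℕ := #{s ∈ Icc 1 t | aseq s = a}

lemma playCount_zero (a : A) : playCount aseq 0 a = 0 := by
  simp [playCount]

lemma playCount_succ (t : ℕ) (a : A) :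
    playCount aseq (t + 1) a = playCount aseq t a + if aseq (t + 1) = a then 1 else 0 := by
  simp only [playCount, card_filter, sum_Icc_succ_top (Nat.le_add_left 1 t)]

lemma playCount_mono (a : A) : Monotone (playCount aseq · a) := fun _ _ hst ↦
  card_le_card (filter_subset_filter _ (Icc_subset_Icc_right hst))

lemma exists_last_play {T : ℕ} {a : A} (h : 0 < playCount aseq T a) :
    ∃ t < T, aseq (t + 1) = a ∧ playCount aseq T a = playCount aseq t a + 1 := by
  induction T with
  | zero => simp [playCount_zero] at h
  | succ T ih =>
    by_cases hplay : aseq (T + 1) = a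
    · exact ⟨T, T.lt_succ_self, hplay, by rw [playCount_succ, if_pos hplay]⟩
    · have hcount : playCount aseq (T + 1) a = playCount aseq T a := by
        rw [playCount_succ, if_neg hplay, add_zero]
      obtain ⟨t, ht, hlast⟩ := ih (hcount ▸ h)
      exact ⟨t, ht.trans T.lt_succ_self, hcount ▸ hlast⟩

lemma exists_le_playCount [Fintype A] [Nonempty A] {R : Type*} [CommSemiring R] [LinearOrder R]
    [IsStrictOrderedRing R] {T : ℕ} {c : R} (hT : Fintype.card A * c ≤ T) :
    ∃ a, c ≤ playCount aseq T a := by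
  obtain ⟨a, -, ha⟩ := exists_le_card_fiber_of_nsmul_le_card_of_maps_to
    (s := Icc 1 T) (f := aseq) (b := c) (fun s _ ↦ mem_univ (aseq s)) univ_nonempty
    (by simpa using hT)
  exact ⟨a, ha⟩

end PlayCount

section Index

/-- The exploration bonus `√(S / max(1, n))` of an action played `n` times, which makes rarely
played actions attractive; the maximum gives an action not played so far the bonus `√S`. -/
noncomputable def explorationBonus (S : ℝ) (n : ℕ) : ℝ := √(S / (max 1 n : ℕ))

/-- The UCBE index `μ + √(S / max(1, n))` of an action with empirical mean `μ` that has been played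
`n` times; UCBE chooses an action maximizing it. -/
noncomputable def ucbeIndex (S μ : ℝ) (n : ℕ) : ℝ := μ + explorationBonus S n

variable {S μ r : ℝ} {n : ℕ}

lemma explorationBonus_le_iff (hr : 0 ≤ r) :
    explorationBonus S n ≤ r ↔ S ≤ r ^ 2 * max 1 (n : ℝ) := by
  have hpos : (0 : ℝ) < max 1 (n : ℝ) := by positivity
  rw [explorationBonus, Real.sqrt_le_left hr, Nat.cast_max, Nat.cast_one, div_le_iff₀ hpos]

lemma ucbeIndex_le_two (hμ : μ ≤ 1) (hn : S ≤ n) : ucbeIndex S μ n ≤ 2 := by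
  have hbonus : explorationBonus S n ≤ 1 :=
    (explorationBonus_le_iff zero_le_one).2 (by simp [hn])
  unfold ucbeIndex
  linarith

lemma two_lt_ucbeIndex (hS : 4 < S) (hμ : 0 ≤ μ) (hn : n < S / 4) : 2 < ucbeIndex S μ n := by
  have hmax : max 1 (n : ℝ) < S / 4 := max_lt (by linarith) hn
  have hbonus : 2 < explorationBonus S n := by
    rw [← not_le, explorationBonus_le_iff zero_le_two]
    linarith
  unfold ucbeIndex
  linarith

end Index

/-- UCBE forced exploration: if at every round `t ≤ T` the chosen action `a_t` maximizes
the index `a ↦ μ̂_t(a) + √(S₀ / max(1, N_{t−1}(a)))` with `μ̂_t(a) ∈ [0,1]` and `S₀ > 4`,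
then once `T ≥ |𝒜| (S₀ + 1)`, every action has been played at least `S₀/4` times. -/
theorem ucbe_forced_exploration
    {A : Type*} [Fintype A] [Nonempty A] [DecidableEq A]
    (S0 : ℝ) (hS0 : 4 < S0)
    (T : ℕ) (aseq : ℕ → A)
    (N : ℕ → A → ℕ)
    (hN : ∀ t a, N t a = ((Finset.Icc 1 t).filter (fun s => aseq s = a)).card)
    (muhat : ℕ → A → ℝ)
    (hmuhat : ∀ t a, muhat t a ∈ Set.Icc (0 : ℝ) 1)
    (hchoice : ∀ t : ℕ, 1 ≤ t → t ≤ T → ∀ a : A,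
      muhat t a + Real.sqrt (S0 / (max 1 (N (t - 1) a) : ℕ)) ≤
        muhat t (aseq t) + Real.sqrt (S0 / (max 1 (N (t - 1) (aseq t)) : ℕ)))
    (hT : (T : ℝ) ≥ (Fintype.card A : ℝ) * (S0 + 1)) :
    ∀ a : A, (N T a : ℝ) ≥ S0 / 4 := by
  obtain rfl : N = playCount aseq := funext₂ hN
  intro a
  obtain ⟨b, hb⟩ := exists_le_playCount aseq hT
  have hb_pos : (0 : ℝ) < playCount aseq T b := by linarith
  obtain ⟨t, htT, rfl, hlast⟩ := exists_last_play aseq (Nat.cast_pos.1 hb_pos)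
  have hSb : S0 ≤ playCount aseq t (aseq (t + 1)) := by
    rw [hlast, Nat.cast_succ] at hb
    linarith
  have hindex : ucbeIndex S0 (muhat (t + 1) a) (playCount aseq t a) ≤ 2 :=
    (hchoice (t + 1) t.succ_pos htT a).trans (ucbeIndex_le_two (hmuhat _ _).2 hSb)
  have hta : S0 / 4 ≤ playCount aseq t a :=
    not_lt.1 fun hlt ↦ hindex.not_gt (two_lt_ucbeIndex hS0 (hmuhat _ _).1 hlt)
  exact hta.trans (Nat.cast_le.2 (playCount_mono aseq a htT.le))
end
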